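/- Let π₁, π₂ be strategy profiles of a finite discounted stochastic game with ‖π₁ − π₂‖∞ ≤ δ, and write D^{π}_{a^i}(s) = max(0, V^{π^i,π^{-i}}_{π^i(s,a^i)=1}(s) − V^{π^i,π^{-i}}(s)). Then for every agent i, state s, and action a^i, |D^{π₁}_{a^i}(s) − D^{π₂}_{a^i}(s)| ≤ 4nS²A_max R_max δ/(1−γ)², and |∑_{b^i∈𝔸^i} (D^{π₁}_{b^i}(s) − D^{π₂}_{b^i}(s))| ≤ 4nS²A_max²R_max δ/(1−γ)². -/

import Mathlib

/-!
The value `V` is Lipschitz in the profile, and `D` is a positive part of a difference of two values.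

Write `Q(s,a) = r(s,a) + γ ∑ P(s'|s,a) V₂(s')`. The Bellman equations give
`(I − γ P^{π₁})(V₁ − V₂)(s) = ∑ₐ (π₁(s,a) − π₂(s,a)) Q(s,a)`. Here `|Q| ≤ R_max/(1−γ)`, and the
`ℓ¹` distance of the two product distributions is at most the sum of the `ℓ¹` distances of the
marginals (`sum_abs_prod_sub_prod_le`), hence at most `n A_max δ`. Since `P^{π₁}` is stochastic,
`(I − γ P^{π₁})⁻¹` has sup-norm at most `1/(1−γ)` (`abs_le_of_residual`), so
`|V₁ − V₂| ≤ n A_max R_max δ/(1−γ)²` (`abs_V_sub_le`). A pure one-state deviation does not increase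
the distance between the profiles, so the same bound holds for the deviation values, and
`|D₁ − D₂| ≤ 2 n A_max R_max δ/(1−γ)²`. This is stronger than the claim because `S ≥ 1`.
-/

open Finset

/-- A finite discounted stochastic game with `n` agents, `S` states and
action counts `A i` for each agent `i`. -/
structure SG (n S : ℕ) (A : Fin n → ℕ) where
  P : Fin S → (∀ i, Fin (A i)) → Fin S → ℝ
  r : Fin n → Fin S → (∀ i, Fin (A i)) → ℝ
  Rmax : ℝ
  γ : ℝ
  P_nonneg : ∀ s a s', 0 ≤ P s a s'
  P_sum_one : ∀ s a, ∑ s', P s a s' = 1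
  r_nonneg : ∀ i s a, 0 ≤ r i s a
  r_le_Rmax : ∀ i s a, r i s a ≤ Rmax
  γ_nonneg : 0 ≤ γ
  γ_lt_one : γ < 1

namespace SG

variable {n S : ℕ} {A : Fin n → ℕ}

/-- A (behavioral) strategy profile: agent `i` plays at state `s` the distribution
`π i s` on its actions. -/
abbrev Profile (n S : ℕ) (A : Fin n → ℕ) := ∀ i : Fin n, Fin S → Fin (A i) → ℝ

/-- `π` is a genuine strategy profile: each `π i s` is a probability distribution. -/
def IsProfile (π : Profile n S A) : Prop :=
  (∀ i s a, 0 ≤ π i s a) ∧ ∀ i s, ∑ a, π i s a = 1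

/-- `A_max`, the largest number of actions of any agent. -/
def Amax (A : Fin n → ℕ) : ℕ := Finset.univ.sup A

/-- Probability of the joint action `a` at state `s` under profile `π`. -/
def jointProb (π : Profile n S A) (s : Fin S) (a : ∀ i, Fin (A i)) : ℝ :=
  ∏ i, π i s (a i)

/-- The state-transition matrix `P^π` induced by the profile `π`. -/
noncomputable def Pmat (g : SG n S A) (π : Profile n S A) : Matrix (Fin S) (Fin S) ℝ :=
  fun s s' => ∑ a, jointProb π s a * g.P s a s'

/-- Expected one-step reward `r^{i,π}(s)` of agent `i` at state `s` under `π`. -/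
noncomputable def rvec (g : SG n S A) (π : Profile n S A) (i : Fin n) (s : Fin S) : ℝ :=
  ∑ a, jointProb π s a * g.r i s a

/-- The value function `V^{π^i,π^{-i}}` of agent `i` under profile `π`: the unique
solution of the Bellman equation `V = r^{i,π} + γ P^π V`, i.e. `(I − γP^π)⁻¹ r^{i,π}`. -/
noncomputable def V (g : SG n S A) (π : Profile n S A) (i : Fin n) : Fin S → ℝ :=
  Matrix.mulVec (1 - g.γ • g.Pmat π)⁻¹ (g.rvec π i)

/-- The profile obtained from `π` by letting agent `i` play the pure action `a`
at state `s` (and `π i` at every other state). -/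
def devProfile (π : Profile n S A) (i : Fin n) (s : Fin S) (a : Fin (A i)) : Profile n S A :=
  Function.update π i (fun t b => if t = s then (if b = a then (1 : ℝ) else 0) else π i t b)

/-- The one-step-deviation value `V^{π^i,π^{-i}}_{π^i(s,a)=1}(s)`. -/
noncomputable def Vdev (g : SG n S A) (π : Profile n S A) (i : Fin n) (s : Fin S)
    (a : Fin (A i)) : ℝ :=
  g.V (devProfile π i s a) i s

/-- `D^{π}_{a}(s) = max(0, V^{π^i,π^{-i}}_{π^i(s,a)=1}(s) − V^{π^i,π^{-i}}(s))`. -/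
noncomputable def D (g : SG n S A) (π : Profile n S A) (i : Fin n) (s : Fin S)
    (a : Fin (A i)) : ℝ :=
  max 0 (g.Vdev π i s a - g.V π i s)

/-- Nash's improvement map `f` on strategy profiles. -/
noncomputable def f (g : SG n S A) (π : Profile n S A) : Profile n S A :=
  fun i s a => (π i s a + g.D π i s a) / (1 + ∑ b, g.D π i s b)

/-- `π` is a Markov perfect equilibrium: no agent can improve its value at any state
by unilaterally switching to another behavioral strategy. -/
def IsMPE (g : SG n S A) (π : Profile n S A) : Prop :=
  ∀ (s : Fin S) (i : Fin n) (σ : Fin S → Fin (A i) → ℝ),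
    ((∀ t b, 0 ≤ σ t b) ∧ ∀ t, ∑ b, σ t b = 1) →
    g.V (Function.update π i σ) i s ≤ g.V π i s

/-- `π` is an `ε`-approximate Markov perfect equilibrium. -/
def IsApproxMPE (g : SG n S A) (π : Profile n S A) (ε : ℝ) : Prop :=
  ∀ (s : Fin S) (i : Fin n) (σ : Fin S → Fin (A i) → ℝ),
    ((∀ t b, 0 ≤ σ t b) ∧ ∀ t, ∑ b, σ t b = 1) →
    g.V (Function.update π i σ) i s - ε ≤ g.V π i s

end SG

namespace SG

/-! ### Distance of product distributions -/

/-- A product of probability distributions sums to one over the joint outcomes. -/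
lemma sum_prod_eq_one {n : ℕ} {A : Fin n → ℕ} (p : ∀ i, Fin (A i) → ℝ)
    (h : ∀ i, ∑ b, p i b = 1) : ∑ a : (∀ i, Fin (A i)), ∏ i, p i (a i) = 1 := by
  have := Finset.prod_univ_sum (fun i => (Finset.univ : Finset (Fin (A i)))) p
  rw [Fintype.piFinset_univ] at this
  rw [← this]
  simp [h]

/-- The `ℓ¹` distance is subadditive over products of probability distributions. -/
lemma sum_abs_prod_sub_prod_le {n : ℕ} {A : Fin n → ℕ} (p q : ∀ i, Fin (A i) → ℝ)
    (hp : ∀ i b, 0 ≤ p i b) (hq : ∀ i b, 0 ≤ q i b)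
    (hp1 : ∀ i, ∑ b, p i b = 1) (hq1 : ∀ i, ∑ b, q i b = 1) :
    ∑ a : (∀ i, Fin (A i)), |∏ i, p i (a i) - ∏ i, q i (a i)|
      ≤ ∑ i, ∑ b, |p i b - q i b| := by
  induction n with
  | zero => simp
  | succ n ih =>
    have ih' := ih (fun i => p i.succ) (fun i => q i.succ) (fun i => hp _) (fun i => hq _)
      (fun i => hp1 _) (fun i => hq1 _)
    rw [← (Fin.consEquiv (fun i => Fin (A i))).sum_comp, Fintype.sum_prod_type, Fin.sum_univ_succ]
    simp only [Fin.prod_univ_succ, Fin.consEquiv_apply, Fin.cons_zero, Fin.cons_succ]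
    -- Exchange the first factor, then the remaining ones.
    have key : ∀ (x : Fin (A 0)) (y : ∀ i : Fin n, Fin (A i.succ)),
        |p 0 x * ∏ i, p i.succ (y i) - q 0 x * ∏ i, q i.succ (y i)| ≤
        |p 0 x - q 0 x| * ∏ i, p i.succ (y i)
          + q 0 x * |∏ i, p i.succ (y i) - ∏ i, q i.succ (y i)| := by
      intro x y
      have e : p 0 x * ∏ i, p i.succ (y i) - q 0 x * ∏ i, q i.succ (y i)
        = (p 0 x - q 0 x) * ∏ i, p i.succ (y i)
          + q 0 x * (∏ i, p i.succ (y i) - ∏ i, q i.succ (y i)) := by ring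
      rw [e]
      refine (abs_add_le _ _).trans (le_of_eq ?_)
      rw [abs_mul, abs_mul, abs_of_nonneg (hq 0 x),
        abs_of_nonneg (Finset.prod_nonneg fun i _ => hp i.succ (y i))]
    refine (Finset.sum_le_sum fun x _ => Finset.sum_le_sum fun y _ => key x y).trans ?_
    simp only [Finset.sum_add_distrib, ← Finset.mul_sum]
    rw [sum_prod_eq_one (fun i => p i.succ) (fun i => hp1 _), ← Finset.sum_mul, ← Finset.sum_mul, hq1 0]
    linarith

variable {n S : ℕ} {A : Fin n → ℕ}

/-! ### The Bellman equation and the resolvent bound -/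

lemma jointProb_nonneg {π : Profile n S A} (h : IsProfile π) (s : Fin S) (a : ∀ i, Fin (A i)) :
    0 ≤ jointProb π s a :=
  Finset.prod_nonneg fun i _ => h.1 i s (a i)

lemma sum_jointProb {π : Profile n S A} (h : IsProfile π) (s : Fin S) :
    ∑ a, jointProb π s a = 1 :=
  sum_prod_eq_one (fun i => π i s) (fun i => h.2 i s)

lemma Pmat_nonneg (g : SG n S A) {π : Profile n S A} (h : IsProfile π) (s t : Fin S) :
    0 ≤ g.Pmat π s t :=
  Finset.sum_nonneg fun a _ => mul_nonneg (jointProb_nonneg h s a) (g.P_nonneg s a t)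

lemma sum_Pmat (g : SG n S A) {π : Profile n S A} (h : IsProfile π) (s : Fin S) :
    ∑ t, g.Pmat π s t = 1 := by
  unfold Pmat
  rw [Finset.sum_comm]
  simp only [← Finset.mul_sum, g.P_sum_one, mul_one, sum_jointProb h]

/-- The average of a function bounded by `M` under weights of total mass one is bounded by `M`. -/
lemma abs_sum_mul_le {ι : Type*} [Fintype ι] (w v : ι → ℝ) (M : ℝ) (hw : ∀ i, 0 ≤ w i)
    (hw1 : ∑ i, w i = 1) (hv : ∀ i, |v i| ≤ M) : |∑ i, w i * v i| ≤ M := by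
  calc |∑ i, w i * v i| ≤ ∑ i, |w i * v i| := Finset.abs_sum_le_sum_abs _ _
    _ ≤ ∑ i, w i * M := Finset.sum_le_sum fun i _ => by
        rw [abs_mul, abs_of_nonneg (hw i)]
        exact mul_le_mul_of_nonneg_left (hv i) (hw i)
    _ = M := by rw [← Finset.sum_mul, hw1, one_mul]

/-- `(I − γ P^π)⁻¹` has sup-norm at most `1/(1−γ)`, stated without the inverse: evaluate the
residual at a state where `|v|` is largest. -/
lemma abs_le_of_residual (g : SG n S A) {π : Profile n S A} (h : IsProfile π) (v : Fin S → ℝ)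
    (c : ℝ) (hc : ∀ s, |v s - g.γ * ∑ t, g.Pmat π s t * v t| ≤ c) (s : Fin S) :
    |v s| ≤ c / (1 - g.γ) := by
  obtain ⟨m, -, hm⟩ := Finset.exists_max_image Finset.univ (fun t => |v t|) ⟨s, Finset.mem_univ s⟩
  refine (hm s (Finset.mem_univ s)).trans ?_
  have h1 : 0 < 1 - g.γ := sub_pos.2 g.γ_lt_one
  rw [le_div_iff₀ h1]
  have h2 : |∑ t, g.Pmat π m t * v t| ≤ |v m| :=
    abs_sum_mul_le _ _ _ (g.Pmat_nonneg h m) (g.sum_Pmat h m) fun t => hm t (Finset.mem_univ t)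
  have h3 := abs_sub_abs_le_abs_sub (v m) (g.γ * ∑ t, g.Pmat π m t * v t)
  rw [abs_mul, abs_of_nonneg g.γ_nonneg] at h3
  have h4 := mul_le_mul_of_nonneg_left h2 g.γ_nonneg
  linarith [hc m]

lemma mulVec_one_sub (g : SG n S A) (π : Profile n S A) (v : Fin S → ℝ) (s : Fin S) :
    Matrix.mulVec (1 - g.γ • g.Pmat π) v s = v s - g.γ * ∑ t, g.Pmat π s t * v t := by
  rw [Matrix.sub_mulVec, Matrix.smul_mulVec, Matrix.one_mulVec]
  rfl

lemma isUnit_det (g : SG n S A) {π : Profile n S A} (h : IsProfile π) :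
    IsUnit (1 - g.γ • g.Pmat π).det := by
  rw [isUnit_iff_ne_zero]
  intro h0
  obtain ⟨v, hv, hv0⟩ := Matrix.exists_mulVec_eq_zero_iff.2 h0
  apply hv
  funext s
  have := g.abs_le_of_residual h v 0 (fun t => by
    rw [← mulVec_one_sub, hv0]; simp) s
  simpa using this

/-- The Bellman equation. -/
lemma bellman (g : SG n S A) {π : Profile n S A} (h : IsProfile π) (i : Fin n) (s : Fin S) :
    g.V π i s - g.γ * ∑ t, g.Pmat π s t * g.V π i t = g.rvec π i s := by
  rw [← mulVec_one_sub, V, Matrix.mulVec_mulVec, Matrix.mul_nonsing_inv _ (g.isUnit_det h),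
    Matrix.one_mulVec]

lemma abs_r_le (g : SG n S A) (i : Fin n) (s : Fin S) (a : ∀ i, Fin (A i)) :
    |g.r i s a| ≤ g.Rmax := by
  rw [abs_of_nonneg (g.r_nonneg i s a)]
  exact g.r_le_Rmax i s a

lemma abs_V_le (g : SG n S A) {π : Profile n S A} (h : IsProfile π) (i : Fin n) (s : Fin S) :
    |g.V π i s| ≤ g.Rmax / (1 - g.γ) := by
  refine g.abs_le_of_residual h _ _ (fun t => ?_) s
  rw [g.bellman h]
  exact abs_sum_mul_le _ _ _ (jointProb_nonneg h t) (sum_jointProb h t) (g.abs_r_le i t)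

/-! ### Lipschitz dependence of values on the profile -/

/-- Nonnegativity of `R_max` needs a joint action to exist, which a profile provides. -/
lemma Rmax_nonneg (g : SG n S A) {π : Profile n S A} (h : IsProfile π) (i : Fin n) (s : Fin S) :
    0 ≤ g.Rmax := by
  have hne : (Finset.univ : Finset (∀ i, Fin (A i))).Nonempty := by
    by_contra hcon
    have := sum_jointProb h s
    rw [Finset.not_nonempty_iff_eq_empty.1 hcon] at this
    simp at this
  obtain ⟨a, -⟩ := hne
  exact (g.r_nonneg i s a).trans (g.r_le_Rmax i s a)

lemma le_Amax (i : Fin n) : (A i : ℝ) ≤ (Amax A : ℝ) := by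
  exact_mod_cast Finset.le_sup (f := A) (Finset.mem_univ i)

lemma sum_abs_jointProb_sub_le {π₁ π₂ : Profile n S A} (h₁ : IsProfile π₁) (h₂ : IsProfile π₂)
    {δ : ℝ} (hδ0 : 0 ≤ δ) (hδ : ∀ i s a, |π₁ i s a - π₂ i s a| ≤ δ) (s : Fin S) :
    ∑ a, |jointProb π₁ s a - jointProb π₂ s a| ≤ n * Amax A * δ := by
  refine (sum_abs_prod_sub_prod_le (fun i => π₁ i s) (fun i => π₂ i s) (fun i => h₁.1 i s)
    (fun i => h₂.1 i s) (fun i => h₁.2 i s) (fun i => h₂.2 i s)).trans ?_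
  calc ∑ i, ∑ b, |π₁ i s b - π₂ i s b| ≤ ∑ i : Fin n, (Amax A : ℝ) * δ := by
        refine Finset.sum_le_sum fun i _ => ?_
        refine (Finset.sum_le_sum fun b _ => hδ i s b).trans ?_
        simp only [Finset.sum_const, Finset.card_univ, Fintype.card_fin, nsmul_eq_mul]
        exact mul_le_mul_of_nonneg_right (le_Amax i) hδ0
    _ = n * Amax A * δ := by simp [mul_assoc]

/-- The value function is Lipschitz in the profile. -/
lemma abs_V_sub_le (g : SG n S A) {π₁ π₂ : Profile n S A} (h₁ : IsProfile π₁)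
    (h₂ : IsProfile π₂) {δ : ℝ} (hδ0 : 0 ≤ δ) (hδ : ∀ i s a, |π₁ i s a - π₂ i s a| ≤ δ)
    (i : Fin n) (s : Fin S) :
    |g.V π₁ i s - g.V π₂ i s| ≤ n * Amax A * δ * g.Rmax / (1 - g.γ) ^ 2 := by
  have h1 : 0 < 1 - g.γ := sub_pos.2 g.γ_lt_one
  have hR := g.Rmax_nonneg h₁ i s
  have main := g.abs_le_of_residual h₁ (fun t => g.V π₁ i t - g.V π₂ i t)
    (n * Amax A * δ * (g.Rmax / (1 - g.γ))) (fun t => ?_) s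
  · refine main.trans (le_of_eq ?_)
    field_simp
  · have e : (g.V π₁ i t - g.V π₂ i t)
          - g.γ * ∑ u, g.Pmat π₁ t u * (g.V π₁ i u - g.V π₂ i u)
        = ∑ a, (jointProb π₁ t a - jointProb π₂ t a)
            * (g.r i t a + g.γ * ∑ u, g.P t a u * g.V π₂ i u) := by
      have hP : ∀ π : Profile n S A, ∑ u, g.Pmat π t u * g.V π₂ i u
          = ∑ a, jointProb π t a * ∑ u, g.P t a u * g.V π₂ i u := by
        intro π
        simp only [Pmat, Finset.sum_mul, Finset.mul_sum, mul_assoc]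
        exact Finset.sum_comm
      have hR : ∀ π : Profile n S A,
          ∑ a, jointProb π t a * (g.r i t a + g.γ * ∑ u, g.P t a u * g.V π₂ i u)
          = g.rvec π i t + g.γ * ∑ u, g.Pmat π t u * g.V π₂ i u := by
        intro π
        rw [hP, rvec, Finset.mul_sum, ← Finset.sum_add_distrib]
        exact Finset.sum_congr rfl fun a _ => by ring
      simp only [sub_mul, mul_sub, Finset.sum_sub_distrib]
      rw [hR, hR]
      linarith [g.bellman h₁ i t, g.bellman h₂ i t]
    have hQ : ∀ a, |g.r i t a + g.γ * ∑ u, g.P t a u * g.V π₂ i u| ≤ g.Rmax / (1 - g.γ) := by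
      intro a
      have hV := abs_sum_mul_le _ _ _ (g.P_nonneg t a) (g.P_sum_one t a) (g.abs_V_le h₂ i)
      refine (abs_add_le _ _).trans ?_
      rw [abs_mul, abs_of_nonneg g.γ_nonneg]
      have h5 := mul_le_mul_of_nonneg_left hV g.γ_nonneg
      have h6 : g.Rmax + g.γ * (g.Rmax / (1 - g.γ)) = g.Rmax / (1 - g.γ) := by
        field_simp
        ring
      linarith [g.abs_r_le i t a]
    rw [e]
    refine (Finset.abs_sum_le_sum_abs _ _).trans ?_
    simp only [abs_mul]
    refine (Finset.sum_le_sum fun a _ =>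
      mul_le_mul_of_nonneg_left (hQ a) (abs_nonneg _)).trans ?_
    rw [← Finset.sum_mul]
    exact mul_le_mul_of_nonneg_right (sum_abs_jointProb_sub_le h₁ h₂ hδ0 hδ t)
      (div_nonneg hR h1.le)

/-! ### One-state deviations -/

lemma isProfile_devProfile {π : Profile n S A} (h : IsProfile π) (i : Fin n) (s : Fin S)
    (a : Fin (A i)) : IsProfile (devProfile π i s a) := by
  refine ⟨fun j t b => ?_, fun j t => ?_⟩
  · by_cases hj : j = i
    · subst hj
      simp only [devProfile, Function.update_self]
      split_ifs
      exacts [zero_le_one, le_rfl, h.1 _ _ _]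
    · simp only [devProfile, Function.update_of_ne hj]
      exact h.1 _ _ _
  · by_cases hj : j = i
    · subst hj
      simp only [devProfile, Function.update_self]
      by_cases ht : t = s
      · simp [ht]
      · simpa [ht] using h.2 j t
    · simp only [devProfile, Function.update_of_ne hj]
      exact h.2 _ _

lemma abs_devProfile_sub_le {π₁ π₂ : Profile n S A} {δ : ℝ} (hδ0 : 0 ≤ δ)
    (hδ : ∀ i s a, |π₁ i s a - π₂ i s a| ≤ δ) (i : Fin n) (s : Fin S) (a : Fin (A i))
    (j : Fin n) (t : Fin S) (b : Fin (A j)) :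
    |devProfile π₁ i s a j t b - devProfile π₂ i s a j t b| ≤ δ := by
  by_cases hj : j = i
  · subst hj
    simp only [devProfile, Function.update_self]
    split_ifs
    · simpa using hδ0
    · simpa using hδ0
    · exact hδ _ _ _
  · simp only [devProfile, Function.update_of_ne hj]
    exact hδ _ _ _

end SG

open SG in
/-- Lipschitz-type bounds for the improvement gaps `D` and their sums. -/
theorem abs_D_diff_le {n S : ℕ} {A : Fin n → ℕ} (g : SG n S A)
    (π₁ π₂ : Profile n S A) (h₁ : IsProfile π₁) (h₂ : IsProfile π₂)
    (δ : ℝ) (hδ : ∀ i s a, |π₁ i s a - π₂ i s a| ≤ δ) :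
    (∀ (i : Fin n) (s : Fin S) (a : Fin (A i)),
      |g.D π₁ i s a - g.D π₂ i s a| ≤
        4 * (n : ℝ) * (S : ℝ) ^ 2 * (Amax A : ℝ) * g.Rmax * δ / (1 - g.γ) ^ 2) ∧
    (∀ (i : Fin n) (s : Fin S),
      |∑ b, (g.D π₁ i s b - g.D π₂ i s b)| ≤
        4 * (n : ℝ) * (S : ℝ) ^ 2 * (Amax A : ℝ) ^ 2 * g.Rmax * δ / (1 - g.γ) ^ 2) := by
  have part1 : ∀ (i : Fin n) (s : Fin S) (a : Fin (A i)),
      |g.D π₁ i s a - g.D π₂ i s a| ≤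
        4 * (n : ℝ) * (S : ℝ) ^ 2 * (Amax A : ℝ) * g.Rmax * δ / (1 - g.γ) ^ 2 := by
    intro i s a
    have hδ0 : 0 ≤ δ := (abs_nonneg _).trans (hδ i s a)
    have hR := g.Rmax_nonneg h₁ i s
    have hV := g.abs_V_sub_le h₁ h₂ hδ0 hδ i s
    have hVd : |g.Vdev π₁ i s a - g.Vdev π₂ i s a| ≤ _ :=
      g.abs_V_sub_le (isProfile_devProfile h₁ i s a) (isProfile_devProfile h₂ i s a) hδ0
        (abs_devProfile_sub_le hδ0 hδ i s a) i s
    set C : ℝ := n * Amax A * δ * g.Rmax / (1 - g.γ) ^ 2 with hC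
    have hC0 : 0 ≤ C := by positivity
    have hS : (1 : ℝ) ≤ (S : ℝ) ^ 2 := by
      have : (1 : ℝ) ≤ S := by exact_mod_cast Fin.pos s
      exact one_le_pow₀ this
    have hD : |g.D π₁ i s a - g.D π₂ i s a| ≤ C + C := by
      rw [D, D, max_comm (0 : ℝ), max_comm (0 : ℝ)]
      refine (abs_max_sub_max_le_abs _ _ _).trans ?_
      rw [show (g.Vdev π₁ i s a - g.V π₁ i s) - (g.Vdev π₂ i s a - g.V π₂ i s)
        = (g.Vdev π₁ i s a - g.Vdev π₂ i s a) - (g.V π₁ i s - g.V π₂ i s) by ring]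
      have htri := abs_add_le (g.Vdev π₁ i s a - g.Vdev π₂ i s a) (-(g.V π₁ i s - g.V π₂ i s))
      rw [abs_neg, ← sub_eq_add_neg] at htri
      linarith
    have e : 4 * (n : ℝ) * (S : ℝ) ^ 2 * (Amax A : ℝ) * g.Rmax * δ / (1 - g.γ) ^ 2
        = 4 * ((S : ℝ) ^ 2 * C) := by rw [hC]; ring
    rw [e]
    nlinarith [mul_le_mul_of_nonneg_right hS hC0]
  refine ⟨part1, fun i s => ?_⟩
  -- The distribution `π₁ i s` has mass one, so agent `i` has an action.
  obtain ⟨a⟩ : Nonempty (Fin (A i)) := by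
    by_contra hcon
    rw [not_nonempty_iff] at hcon
    simpa using h₁.2 i s
  refine (Finset.abs_sum_le_sum_abs _ _).trans ?_
  refine (Finset.sum_le_sum fun b _ => part1 i s b).trans ?_
  simp only [Finset.sum_const, Finset.card_univ, Fintype.card_fin, nsmul_eq_mul]
  refine (mul_le_mul_of_nonneg_right (le_Amax i)
    ((abs_nonneg _).trans (part1 i s a))).trans (le_of_eq ?_)
  ring
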